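/- Let d ≥ 3. Set T_k = (0, ε, k) for k = 0,1,…,d−2 and T_{d−1} = (0, d−1, 0). Then for every bispecial factor w of u_d there exist k ∈ {0,…,d−1} and n ∈ ℕ such that f^n(T_k) is a triplet of 𝒯 whose middle component equals w or equals the reversal w̄ of w. -/

import Mathlib

namespace RichRT

variable {A : Type*}

/-- The word `w` occurs in the sequence `u` at position `j`. -/
def OccursAt (w : List A) (u : ℕ → A) (j : ℕ) : Prop :=
  w = (List.range w.length).map fun t => u (j + t)

/-- `w` is a factor of the infinite sequence `u`. -/
def IsFactorS (w : List A) (u : ℕ → A) : Prop :=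
  ∃ j : ℕ, OccursAt w u j

/-- `u` is recurrent: every factor occurs infinitely often. -/
def Recurrent (u : ℕ → A) : Prop :=
  ∀ w : List A, IsFactorS w u → ∀ N : ℕ, ∃ j, N ≤ j ∧ OccursAt w u j

/-- The number of distinct palindromic factors of a finite word. -/
noncomputable def palCount (w : List A) : ℕ :=
  Set.ncard {p : List A | p <:+: w ∧ p.reverse = p}

/-- A finite word of length `n` is rich if it has exactly `n+1` palindromic factors. -/
def RichWord (w : List A) : Prop := palCount w = w.length + 1

/-- A sequence is rich if all its factors are rich. -/
def RichSeq (u : ℕ → A) : Prop := ∀ w : List A, IsFactorS w u → RichWord w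

/-- The prefix of length `k` of the periodic sequence `vvv⋯`. -/
def powPref (v : List A) (k : ℕ) : List A := ((List.replicate k v).flatten).take k

/-- The set of exponents `k/|v|` of fractional powers `v^(k/|v|)` occurring in `u`,
with `|v| ≥ n`. -/
def expSet (u : ℕ → A) (n : ℕ) : Set ℝ :=
  {x | ∃ (v : List A) (k : ℕ), v ≠ [] ∧ n ≤ v.length ∧
    IsFactorS (powPref v k) u ∧ x = (k : ℝ) / (v.length : ℝ)}

/-- The critical exponent of a sequence, with values in `EReal`. -/
noncomputable def critExp (u : ℕ → A) : EReal :=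
  sSup ((fun x : ℝ => (x : EReal)) '' expSet u 0)

/-- The asymptotic critical exponent of a sequence: `⊤` if the critical exponent is `⊤`,
otherwise the limit (= infimum, by monotonicity) over `n` of the suprema of exponents of
powers `v^e` with `|v| ≥ n`. -/
noncomputable def acritExp (u : ℕ → A) : EReal :=
  if critExp u = ⊤ then ⊤
  else ⨅ n : ℕ, sSup ((fun x : ℝ => (x : EReal)) '' expSet u n)

/-- The morphism `φ_d` on letters: `i ↦ 0(i+1)` for `i < d-1`, `d-1 ↦ 0(d-1)(d-1)`. -/
def phiL (d : ℕ) (i : ℕ) : List ℕ :=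
  if i < d - 1 then [0, i + 1] else [0, d - 1, d - 1]

/-- The morphism `φ_d` on words. -/
def phiW (d : ℕ) (w : List ℕ) : List ℕ := w.flatMap (phiL d)

/-- `u` is the fixed point of `φ_d`: it begins with `0` and `φ_d(u) = u`, i.e. the image
of every prefix of `u` is again a prefix of `u`. -/
def IsPhiFixed (d : ℕ) (u : ℕ → ℕ) : Prop :=
  u 0 = 0 ∧ ∀ m : ℕ, OccursAt (phiW d ((List.range m).map u)) u 0

/-- Left extensions of `w` in `u`. -/
def Lext (u : ℕ → ℕ) (w : List ℕ) : Set (List ℕ) :=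
  {x | ∃ i : ℕ, x = i :: w ∧ IsFactorS x u}

/-- Right extensions of `w` in `u`. -/
def Rext (u : ℕ → ℕ) (w : List ℕ) : Set (List ℕ) :=
  {x | ∃ i : ℕ, x = w ++ [i] ∧ IsFactorS x u}

/-- Both-sided extensions of `w` in `u`. -/
def Bext (u : ℕ → ℕ) (w : List ℕ) : Set (List ℕ) :=
  {x | ∃ i j : ℕ, x = i :: (w ++ [j]) ∧ IsFactorS x u}

/-- `w` is a bispecial factor of `u`. -/
def Bispecial (u : ℕ → ℕ) (w : List ℕ) : Prop :=
  IsFactorS w u ∧ 2 ≤ (Lext u w).ncard ∧ 2 ≤ (Rext u w).ncard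

/-- The bilateral order `b(w) = #Bext(w) − #Lext(w) − #Rext(w) + 1`. -/
noncomputable def bord (u : ℕ → ℕ) (w : List ℕ) : ℤ :=
  ((Bext u w).ncard : ℤ) - ((Lext u w).ncard : ℤ) - ((Rext u w).ncard : ℤ) + 1

/-- The palindromes `F_0 = ε`, `F_i = φ(F_{i-1})0`. -/
def Fword (d : ℕ) : ℕ → List ℕ
  | 0 => []
  | i + 1 => phiW d (Fword d i) ++ [0]

/-- Membership in the set `𝒯` of bispecial triplets. -/
def TripleMem (d : ℕ) (u : ℕ → ℕ) (t : ℕ × List ℕ × ℕ) : Prop :=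
  Bispecial u t.2.1 ∧ t.1 < d - 1 ∧ t.2.2 < d - 1 ∧
    IsFactorS (t.1 :: t.2.1) u ∧ IsFactorS (t.2.1 ++ [t.2.2]) u

/-- The map `f` on triplets. -/
def fmap (d : ℕ) (t : ℕ × List ℕ × ℕ) : ℕ × List ℕ × ℕ :=
  ((t.1 + 1) % (d - 1),
   (if t.1 = d - 2 then [d - 1] else []) ++ phiW d t.2.1 ++ [0] ++
     (if t.2.2 = d - 2 then [d - 1] else []),
   (t.2.2 + 1) % (d - 1))

/-- The initial triplets `T_k = (0, ε, k)` for `k ≤ d-2` and `T_{d-1} = (0, d-1, 0)`. -/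
def Tinit (d k : ℕ) : ℕ × List ℕ × ℕ :=
  if k = d - 1 then (0, [d - 1], 0) else (0, ([] : List ℕ), k)

/-- The Parikh vector of a word. -/
def parikh (d : ℕ) (w : List ℕ) : Fin d → ℕ := fun i => w.count (i : ℕ)

/-- The incidence matrix of `φ_d`. -/
def Mmat (d : ℕ) : Matrix (Fin d) (Fin d) ℕ := fun i j => (phiL d (j : ℕ)).count (i : ℕ)

/-- `r` is a return word to `w` in `u`. -/
def ReturnWord (u : ℕ → ℕ) (w r : List ℕ) : Prop :=
  ∃ j ℓ : ℕ, j < ℓ ∧ OccursAt w u j ∧ OccursAt w u ℓ ∧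
    (∀ m, j < m → m < ℓ → ¬ OccursAt w u m) ∧
    r = (List.range (ℓ - j)).map fun t => u (j + t)

/-- `R` is a complete return word to `w` in `u`. -/
def CompleteReturn (u : ℕ → ℕ) (w R : List ℕ) : Prop :=
  ∃ r : List ℕ, ReturnWord u w r ∧ R = r ++ w

/-! A bispecial factor containing `0` has the form `s φ(v) 0 t` with `s, t ∈ {ε, d - 1}` and `v` a
shorter word, again special on both sides. A letter extending `v` on either side determines the
letter extending `s φ(v) 0 t` on that side, monotonically. Let `a` and `b` be the least left and
right extension letters of a bispecial factor `w`. Then `a w` extends to the right by some letter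
`y ≥ b`, and `w b` to the left by some letter `x ≥ a`; by monotonicity this property of `(a, w, b)`
descends to the triplet of which `(a, w, b)` is the image under `f`. The descent ends at a word
without `0`, that is at `ε` or `d - 1`. Any two consecutive letters of `u` other than
`(d - 1) (d - 1)` include a `0`, so a triplet with the property at `ε` or `d - 1` is some `T_k` or
its mirror image. Finally `f` commutes with mirror images, and the factors of `u` are closed under
reversal.
-/

section Factors

variable {u : ℕ → A} {v w : List A}

/-- The prefix of length `m` of the sequence `u`. -/
def prefixOf (u : ℕ → A) (m : ℕ) : List A := (List.range m).map u

@[simp] lemma length_prefixOf (u : ℕ → A) (m : ℕ) : (prefixOf u m).length = m := by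
  simp [prefixOf]

lemma prefixOf_add (u : ℕ → A) (m n : ℕ) :
    prefixOf u (m + n) = prefixOf u m ++ (List.range n).map fun t => u (m + t) := by
  simp [prefixOf, List.range_add, Function.comp_def]

lemma prefixOf_isPrefix (u : ℕ → A) {m n : ℕ} (h : m ≤ n) : prefixOf u m <+: prefixOf u n := by
  obtain ⟨k, rfl⟩ := Nat.exists_eq_add_of_le h
  exact prefixOf_add u m k ▸ List.prefix_append _ _

lemma isFactorS_iff_infix_prefixOf : IsFactorS w u ↔ ∃ m, w <:+: prefixOf u m := by
  constructor
  · rintro ⟨j, hj⟩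
    refine ⟨j + w.length, prefixOf u j, [], ?_⟩
    rw [prefixOf_add, ← hj, List.append_nil]
  · rintro ⟨m, p, q, h⟩
    have hm : m = p.length + (w.length + q.length) := by
      simpa [add_assoc] using (congrArg List.length h).symm
    rw [hm, prefixOf_add, List.append_assoc] at h
    have hwq := (List.append_inj h (length_prefixOf u _).symm).2
    rw [List.range_add, List.map_append] at hwq
    exact ⟨p.length, (List.append_inj hwq (by simp)).1⟩

lemma isFactorS_prefixOf (u : ℕ → A) (m : ℕ) : IsFactorS (prefixOf u m) u :=
  isFactorS_iff_infix_prefixOf.2 ⟨m, List.infix_rfl⟩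

lemma IsFactorS.of_isInfix (hw : IsFactorS w u) (hvw : v <:+: w) : IsFactorS v u := by
  obtain ⟨m, hm⟩ := isFactorS_iff_infix_prefixOf.1 hw
  exact isFactorS_iff_infix_prefixOf.2 ⟨m, hvw.trans hm⟩

lemma IsFactorS.exists_append_singleton (hw : IsFactorS w u) : ∃ b, IsFactorS (w ++ [b]) u := by
  obtain ⟨j, hj⟩ := hw
  refine ⟨u (j + w.length), j, ?_⟩
  rw [OccursAt, List.length_append, List.length_singleton, List.range_succ, List.map_append, ← hj,
    List.map_singleton]

/-- `w` has two distinct left extensions in `u`. When the factors of `u` are closed under reversal,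
`LeftSpecial u w.reverse` says that `w` has two distinct right extensions. -/
def LeftSpecial (u : ℕ → A) (w : List A) : Prop :=
  ∃ a b, a ≠ b ∧ IsFactorS (a :: w) u ∧ IsFactorS (b :: w) u

/-- The mirror image of a triplet `(a, w, b)`. -/
def tripleRev (τ : A × List A × A) : A × List A × A := (τ.2.2, τ.2.1.reverse, τ.1)

end Factors

section Morphism

variable {d : ℕ}

lemma phiL_eq_cons (hd : 2 ≤ d) (a : ℕ) : ∃ r, phiL d a = 0 :: r ∧ 0 ∉ r := by
  unfold phiL
  split
  · exact ⟨[a + 1], rfl, by simp⟩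
  · exact ⟨[d - 1, d - 1], rfl, by simp only [List.mem_cons, List.not_mem_nil, or_false]; lia⟩

lemma two_le_length_phiL (d a : ℕ) : 2 ≤ (phiL d a).length := by
  unfold phiL; split <;> simp

lemma lt_of_mem_phiL (hd : 2 ≤ d) {a x : ℕ} (hx : x ∈ phiL d a) : x < d := by
  unfold phiL at hx
  split at hx <;> simp only [List.mem_cons, List.not_mem_nil, or_false] at hx <;> lia

lemma cons_reverse_phiL (d a : ℕ) : 0 :: (phiL d a).reverse = phiL d a ++ [0] := by
  unfold phiL; split <;> rfl

@[simp] lemma phiW_nil (d : ℕ) : phiW d [] = [] := rfl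

lemma phiW_cons (d a : ℕ) (w : List ℕ) : phiW d (a :: w) = phiL d a ++ phiW d w := rfl

@[simp] lemma phiW_append (d : ℕ) (v w : List ℕ) : phiW d (v ++ w) = phiW d v ++ phiW d w :=
  List.flatMap_append

@[simp] lemma phiW_singleton (d a : ℕ) : phiW d [a] = phiL d a :=
  List.flatMap_singleton (phiL d) a

lemma two_mul_length_le_length_phiW (d : ℕ) (w : List ℕ) :
    2 * w.length ≤ (phiW d w).length := by
  induction w with
  | nil => simp
  | cons a w ih =>
    have := two_le_length_phiL d a
    rw [phiW_cons, List.length_append, List.length_cons]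
    lia

lemma lt_of_mem_phiW (hd : 2 ≤ d) {y : List ℕ} {x : ℕ} (hx : x ∈ phiW d y) : x < d := by
  obtain ⟨a, -, ha⟩ := List.mem_flatMap.1 hx
  exact lt_of_mem_phiL hd ha

lemma cons_reverse_phiW (d : ℕ) (w : List ℕ) :
    0 :: (phiW d w).reverse = phiW d w.reverse ++ [0] := by
  induction w with
  | nil => rfl
  | cons a w ih =>
    calc 0 :: (phiW d (a :: w)).reverse
        = (0 :: (phiW d w).reverse) ++ (phiL d a).reverse := by simp [phiW_cons]
      _ = phiW d w.reverse ++ (0 :: (phiL d a).reverse) := by rw [ih]; simp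
      _ = phiW d (a :: w).reverse ++ [0] := by simp [cons_reverse_phiL]

lemma reverse_append_phiW_append (d : ℕ) (s v t : List ℕ) :
    (s ++ phiW d v ++ [0] ++ t).reverse = t.reverse ++ phiW d v.reverse ++ [0] ++ s.reverse := by
  have h := cons_reverse_phiW d v
  simp only [List.reverse_append, List.reverse_singleton, List.append_assoc]
  rw [← List.append_assoc (phiW d v.reverse), ← h]
  simp

lemma head?_phiW (hd : 2 ≤ d) (y : List ℕ) : ∀ x ∈ (phiW d y).head?, x = 0 := by
  cases y with
  | nil => simp
  | cons a y =>
    obtain ⟨r, hr, -⟩ := phiL_eq_cons hd a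
    simp only [phiW_cons, hr, List.cons_append, List.head?_cons, Option.mem_def, Option.some.injEq]
    exact fun x hx => hx.symm

lemma head?_phiW_append_zero_cons (hd : 2 ≤ d) (y q : List ℕ) :
    ∀ x ∈ (phiW d y ++ 0 :: q).head?, x = 0 := by
  rw [List.head?_append]
  intro x hx
  rcases Option.or_eq_some_iff.1 hx with h | ⟨-, h⟩
  · exact head?_phiW hd y x h
  · exact (Option.some.inj h).symm

/-- `0` occurs in the image of a letter exactly as its first letter, so the image of a word can be
cut in front of any of its zeros. -/
lemma exists_split_of_phiW_eq_append (hd : 2 ≤ d) {y p q : List ℕ} (hq : ∀ x ∈ q.head?, x = 0)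
    (h : phiW d y = p ++ q) : ∃ y₁ y₂, y = y₁ ++ y₂ ∧ phiW d y₁ = p ∧ phiW d y₂ = q := by
  induction y generalizing p with
  | nil =>
    obtain ⟨rfl, rfl⟩ := List.append_eq_nil_iff.1 h.symm
    exact ⟨[], [], rfl, rfl, rfl⟩
  | cons a y ih =>
    rw [phiW_cons, List.append_eq_append_iff] at h
    rcases h with ⟨p', rfl, hy⟩ | ⟨r, ha, rfl⟩
    · obtain ⟨y₁, y₂, rfl, rfl, rfl⟩ := ih hy
      exact ⟨a :: y₁, y₂, rfl, rfl, rfl⟩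
    · obtain ⟨z, hz, hz0⟩ := phiL_eq_cons hd a
      rcases r with _ | ⟨x, r⟩
      · exact ⟨[a], y, rfl, by simpa using ha, rfl⟩
      · obtain rfl : x = 0 := hq x rfl
        rcases p with _ | ⟨x, p⟩
        · exact ⟨[], a :: y, rfl, rfl, by rw [phiW_cons, ha]; rfl⟩
        · rw [hz, List.cons_append, List.cons.injEq] at ha
          exact absurd (ha.2 ▸ by simp) hz0

lemma eq_of_append_phiL_eq (hd : 2 ≤ d) {a b : ℕ} (ha : a < d) (hb : b < d) {p q : List ℕ}
    (h : p ++ phiL d a = q ++ phiL d b) : a = b := by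
  replace h := congrArg List.reverse h
  unfold phiL at h
  split at h <;> split at h <;>
    simp only [List.reverse_append, List.reverse_cons, List.reverse_nil, List.nil_append,
      List.cons_append, List.cons.injEq] at h <;> lia

lemma phiW_injOn (hd : 2 ≤ d) : Set.InjOn (phiW d) {w | ∀ a ∈ w, a < d} := by
  intro v hv w hw h
  induction v using List.reverseRecOn generalizing w with
  | nil =>
    have := two_mul_length_le_length_phiW d w
    rw [← h] at this
    simpa using this
  | append_singleton v a ih =>
    rcases List.eq_nil_or_concat' w with rfl | ⟨w, b, rfl⟩
    · have := two_mul_length_le_length_phiW d (v ++ [a])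
      rw [h] at this
      simp at this
    · simp only [phiW_append, phiW_singleton] at h
      obtain rfl := eq_of_append_phiL_eq hd (hv a (by simp)) (hw b (by simp)) h
      rw [ih (fun x hx => hv x (by simp [hx])) (fun x hx => hw x (by simp [hx]))
        (List.append_cancel_right h)]

lemma exists_infix_tail_phiL (hd : 2 ≤ d) {s y : List ℕ} (hs : s ≠ []) (h0 : 0 ∉ s)
    (h : s <:+: phiW d y) : ∃ a, s <:+: (phiL d a).tail := by
  induction y with
  | nil => exact absurd (List.infix_nil.1 h) hs
  | cons a y ih =>
    rw [phiW_cons, List.infix_append_iff] at h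
    have h_image : s <:+: phiL d a ∨ s <:+: phiW d y := by
      rcases h with h | h | ⟨s₁, s₂, rfl, h₁, h₂⟩
      · exact .inl h
      · exact .inr h
      · rcases s₂ with _ | ⟨x, s₂⟩
        · exact .inl (by simpa using h₁.isInfix)
        · obtain rfl : x = 0 := head?_phiW hd y x (by obtain ⟨q, hq⟩ := h₂; simp [← hq])
          simp at h0
    rcases h_image with h | h
    · obtain ⟨r, hr, -⟩ := phiL_eq_cons hd a
      rw [hr, List.infix_cons_iff, List.prefix_cons_iff] at h
      rcases h with (h | ⟨s', rfl, -⟩) | h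
      · exact absurd h hs
      · simp at h0
      · exact ⟨a, by rwa [hr]⟩
    · exact ih h

lemma singleton_suffix_phiL_iff {a b : ℕ} : [a] <:+ phiL d b ↔ a = min (b + 1) (d - 1) := by
  unfold phiL
  split <;> simp only [List.suffix_cons_iff, List.suffix_nil, List.cons.injEq, List.cons_ne_nil,
    reduceCtorEq, and_true, and_false, or_false, false_or] <;> lia

lemma pair_suffix_phiL_iff {a b : ℕ} :
    [a, d - 1] <:+ phiL d b ↔ b + 1 = d - 1 ∧ a = 0 ∨ d - 1 ≤ b ∧ a = d - 1 := by
  unfold phiL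
  split <;> simp only [List.suffix_cons_iff, List.suffix_nil, List.cons.injEq, List.cons_ne_nil,
    reduceCtorEq, and_true, and_false, or_false, false_or] <;> lia

/-- `a :: s <:+ phiL d a'` says that the letter `a'` in front of a word `v` produces the letter `a`
in front of the word `s φ(v)`. -/
lemma fmap_left_of_suffix_phiL {s : List ℕ} (hs : s = [] ∨ s = [d - 1]) {a a' : ℕ}
    (ha : a < d - 1) (h : a :: s <:+ phiL d a') :
    a' < d - 1 ∧ (a' + 1) % (d - 1) = a ∧ (if a' = d - 2 then [d - 1] else []) = s := by
  rcases hs with rfl | rfl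
  · rw [singleton_suffix_phiL_iff] at h
    have h_succ : a' + 1 = a := by lia
    exact ⟨by lia, by rw [h_succ, Nat.mod_eq_of_lt ha], if_neg (by lia)⟩
  · rw [pair_suffix_phiL_iff] at h
    have h_succ : a' + 1 = d - 1 := by lia
    exact ⟨by lia, by rw [h_succ, Nat.mod_self]; lia, if_pos (by lia)⟩

lemma le_of_suffix_phiL {s : List ℕ} (hs : s = [] ∨ s = [d - 1]) {a a' x x' : ℕ}
    (ha : a < d - 1) (hax : a ≤ x) (h : a :: s <:+ phiL d a') (hx : x :: s <:+ phiL d x') :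
    a' ≤ x' := by
  rcases hs with rfl | rfl
  · rw [singleton_suffix_phiL_iff] at h hx
    lia
  · rw [pair_suffix_phiL_iff] at h hx
    lia

lemma exists_concat_of_phiW_eq (hd : 2 ≤ d) {y p s : List ℕ} {a : ℕ} (hs : 0 ∉ s)
    (h : phiW d y = p ++ a :: s) : ∃ z a', y = z ++ [a'] ∧ a :: s <:+ phiL d a' := by
  rcases List.eq_nil_or_concat' y with rfl | ⟨z, a', rfl⟩
  · simp at h
  · refine ⟨z, a', rfl, ?_⟩
    rw [phiW_append, phiW_singleton] at h
    obtain ⟨r, hr, -⟩ := phiL_eq_cons hd a'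
    rcases List.suffix_or_suffix_of_suffix (h ▸ List.suffix_append p (a :: s))
        (List.suffix_append (phiW d z) (phiL d a')) with h_suffix | h_suffix
    · exact h_suffix
    · rcases List.suffix_cons_iff.1 h_suffix with h_eq | h_tail
      · rw [h_eq]
      · exact absurd (h_tail.mem (by simp [hr])) hs

lemma exists_cons_of_phiW_eq (hd : 2 ≤ d) {y q t : List ℕ} {b : ℕ} (ht : 0 ∉ t)
    (h : phiW d y = 0 :: t.reverse ++ b :: q) : ∃ b' z, y = b' :: z ∧ b :: t <:+ phiL d b' := by
  have h_rev : phiW d y.reverse ++ [0] = (0 :: q.reverse ++ b :: t) ++ [0] := by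
    rw [← cons_reverse_phiW, h]
    simp
  obtain ⟨z, b', hz, hb⟩ :=
    exists_concat_of_phiW_eq hd ht (List.append_cancel_right h_rev)
  exact ⟨b', z.reverse, by simpa using congrArg List.reverse hz, hb⟩

lemma fmap_tripleRev (d : ℕ) (τ : ℕ × List ℕ × ℕ) :
    fmap d (tripleRev τ) = tripleRev (fmap d τ) := by
  have h_rev (x : ℕ) :
      (if x = d - 2 then [d - 1] else []).reverse = if x = d - 2 then [d - 1] else [] := by
    split <;> rfl
  simp only [fmap, tripleRev, reverse_append_phiW_append, h_rev]
  rfl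

end Morphism

section FixedPoint

variable {d : ℕ} {u : ℕ → ℕ} {v w : List ℕ}

lemma IsPhiFixed.phiW_prefixOf (hu : IsPhiFixed d u) (m : ℕ) :
    phiW d (prefixOf u m) = prefixOf u (phiW d (prefixOf u m)).length := by
  simpa only [OccursAt, prefixOf, zero_add] using hu.2 m

lemma IsPhiFixed.prefixOf_prefix_phiW (hu : IsPhiFixed d u) {m n : ℕ} (h : n ≤ 2 * m) :
    prefixOf u n <+: phiW d (prefixOf u m) := by
  rw [hu.phiW_prefixOf]
  refine prefixOf_isPrefix u (h.trans ?_)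
  simpa using two_mul_length_le_length_phiW d (prefixOf u m)

lemma IsFactorS.image (hu : IsPhiFixed d u) (hw : IsFactorS w u) : IsFactorS (phiW d w) u := by
  obtain ⟨m, hm⟩ := isFactorS_iff_infix_prefixOf.1 hw
  rw [isFactorS_iff_infix_prefixOf]
  have h_image : phiW d w <:+: phiW d (prefixOf u m) := hm.flatMap (phiL d)
  exact ⟨_, hu.phiW_prefixOf m ▸ h_image⟩

lemma IsFactorS.image_append_zero (hd : 2 ≤ d) (hu : IsPhiFixed d u) (hw : IsFactorS w u) :
    IsFactorS (phiW d w ++ [0]) u := by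
  obtain ⟨b, hb⟩ := hw.exists_append_singleton
  obtain ⟨r, hr, -⟩ := phiL_eq_cons hd b
  exact (hb.image hu).of_isInfix ⟨[], r, by simp [hr]⟩

lemma IsFactorS.exists_infix_phiW (hu : IsPhiFixed d u) (hw : IsFactorS w u) :
    ∃ y, IsFactorS y u ∧ w <:+: phiW d y := by
  obtain ⟨m, hm⟩ := isFactorS_iff_infix_prefixOf.1 hw
  exact ⟨prefixOf u m, isFactorS_prefixOf u m,
    hm.trans (hu.prefixOf_prefix_phiW (by lia)).isInfix⟩

lemma IsFactorS.lt (hd : 2 ≤ d) (hu : IsPhiFixed d u) (hw : IsFactorS w u) : ∀ a ∈ w, a < d := by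
  obtain ⟨y, -, hy⟩ := hw.exists_infix_phiW hu
  exact fun a ha => lt_of_mem_phiW hd (hy.mem ha)

/-- The prefix of length `m + 1` is a prefix of `φ(p)`, where `p` is the prefix of length `m ≥ 1`,
and `φ(p)0` is mirrored to `φ(p.reverse)0`. -/
lemma isFactorS_reverse_prefixOf (hd : 2 ≤ d) (hu : IsPhiFixed d u) (m : ℕ) :
    IsFactorS (prefixOf u m).reverse u := by
  induction m with
  | zero => exact isFactorS_prefixOf u 0
  | succ m ih =>
    rcases Nat.eq_zero_or_pos m with rfl | hm
    · exact isFactorS_prefixOf u 1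
    · refine (ih.image_append_zero hd hu).of_isInfix ?_
      rw [← cons_reverse_phiW]
      exact ((List.reverse_suffix.2 (hu.prefixOf_prefix_phiW (by lia))).trans
        (List.suffix_cons _ _)).isInfix

lemma IsFactorS.reverse (hd : 2 ≤ d) (hu : IsPhiFixed d u) (hw : IsFactorS w u) :
    IsFactorS w.reverse u := by
  obtain ⟨m, hm⟩ := isFactorS_iff_infix_prefixOf.1 hw
  exact (isFactorS_reverse_prefixOf hd hu m).of_isInfix (List.reverse_infix.2 hm)

lemma Rext_reverse (hd : 2 ≤ d) (hu : IsPhiFixed d u) (w : List ℕ) :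
    Rext u w.reverse = List.reverse '' Lext u w := by
  ext x
  constructor
  · rintro ⟨i, rfl, h⟩
    exact ⟨i :: w, ⟨i, rfl, by simpa using h.reverse hd hu⟩, List.reverse_cons⟩
  · rintro ⟨_, ⟨i, rfl, h⟩, rfl⟩
    exact ⟨i, List.reverse_cons, h.reverse hd hu⟩

lemma Lext_reverse (hd : 2 ≤ d) (hu : IsPhiFixed d u) (w : List ℕ) :
    Lext u w.reverse = List.reverse '' Rext u w := by
  rw [← w.reverse_reverse, Rext_reverse hd hu, Set.image_image]
  simp

lemma Bispecial.reverse (hd : 2 ≤ d) (hu : IsPhiFixed d u) (hw : Bispecial u w) :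
    Bispecial u w.reverse := by
  obtain ⟨h_factor, h_left, h_right⟩ := hw
  refine ⟨h_factor.reverse hd hu, ?_, ?_⟩
  · rwa [Lext_reverse hd hu, Set.ncard_image_of_injective _ List.reverse_injective]
  · rwa [Rext_reverse hd hu, Set.ncard_image_of_injective _ List.reverse_injective]

lemma TripleMem.mirror (hd : 2 ≤ d) (hu : IsPhiFixed d u) {τ : ℕ × List ℕ × ℕ}
    (hτ : TripleMem d u τ) : TripleMem d u (tripleRev τ) := by
  obtain ⟨h_bisp, h_left_lt, h_right_lt, h_left, h_right⟩ := hτ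
  exact ⟨h_bisp.reverse hd hu, h_right_lt, h_left_lt,
    by simpa [tripleRev] using h_right.reverse hd hu,
    by simpa [tripleRev] using h_left.reverse hd hu⟩

lemma Bispecial.leftSpecial (hw : Bispecial u w) : LeftSpecial u w := by
  obtain ⟨h_nontrivial, -⟩ := Set.one_lt_ncard_iff_nontrivial_and_finite.1 hw.2.1
  obtain ⟨_, ⟨a, rfl, ha⟩, _, ⟨b, rfl, hb⟩, h_ne⟩ := h_nontrivial
  exact ⟨a, b, fun h => h_ne (h ▸ rfl), ha, hb⟩

lemma IsFactorS.eq_pair_of_zero_notMem (hd : 2 ≤ d) (hu : IsPhiFixed d u)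
    (hw : IsFactorS w u) (h0 : 0 ∉ w) (h_len : 2 ≤ w.length) : w = [d - 1, d - 1] := by
  obtain ⟨y, -, hy⟩ := hw.exists_infix_phiW hu
  obtain ⟨a, ha⟩ := exists_infix_tail_phiL hd (List.ne_nil_of_length_pos (by lia)) h0 hy
  unfold phiL at ha
  split at ha
  · exact absurd (h_len.trans ha.length_le) (by simp)
  · exact ha.eq_of_length_le h_len

lemma LeftSpecial.eq_nil_or_singleton (hd : 2 ≤ d) (hu : IsPhiFixed d u) {s r : List ℕ}
    (h : LeftSpecial u (s ++ r)) (hs : 0 ∉ s) : s = [] ∨ s = [d - 1] := by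
  obtain ⟨a, b, h_ne, ha, hb⟩ := h
  obtain ⟨c, hc0, hc⟩ : ∃ c, c ≠ 0 ∧ IsFactorS (c :: s) u := by
    have hc {c : ℕ} (h : IsFactorS (c :: (s ++ r)) u) : IsFactorS (c :: s) u :=
      h.of_isInfix ⟨[], r, by simp⟩
    rcases eq_or_ne a 0 with rfl | ha0
    · exact ⟨b, h_ne.symm, hc hb⟩
    · exact ⟨a, ha0, hc ha⟩
  refine or_iff_not_imp_left.2 fun hs_ne => ?_
  have h_pair := hc.eq_pair_of_zero_notMem hd hu (by simp [hs, hc0.symm])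
    (Nat.succ_le_succ (List.length_pos_iff.2 hs_ne))
  exact (List.cons.inj h_pair).2

/-- Cut `w` at its first and last zeros. -/
lemma IsFactorS.exists_eq_append_phiW_append (hd : 2 ≤ d) (hu : IsPhiFixed d u)
    (hw : IsFactorS w u) (h0 : 0 ∈ w) :
    ∃ s v t : List ℕ, w = s ++ phiW d v ++ [0] ++ t.reverse ∧ 0 ∉ s ∧ 0 ∉ t ∧ IsFactorS v u := by
  obtain ⟨y, hy, p, q, hpq⟩ := hw.exists_infix_phiW hu
  obtain ⟨s, r, rfl, hs⟩ := List.eq_append_cons_of_mem h0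
  obtain ⟨t, m, hm, ht⟩ := List.eq_append_cons_of_mem (a := 0) (xs := (0 :: r).reverse) (by simp)
  have hr : 0 :: r = m.reverse ++ [0] ++ t.reverse := by
    simpa using congrArg List.reverse hm
  obtain ⟨y₁, y₂, rfl, h₁, -⟩ := exists_split_of_phiW_eq_append hd (y := y)
    (p := p ++ s ++ m.reverse) (q := 0 :: (t.reverse ++ q)) (by simp) (by simp [← hpq, hr])
  obtain ⟨z₁, z₂, rfl, -, h₂⟩ := exists_split_of_phiW_eq_append hd (y := y₁)
    (p := p ++ s) (q := m.reverse) (by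
      rcases h : m.reverse with _ | ⟨x, m⟩
      · simp
      · rw [h, List.append_assoc, List.cons_append, List.cons.injEq] at hr
        simp [hr.1]) h₁
  exact ⟨s, z₂, t, by rw [hr, h₂]; simp, hs, ht,
    hy.of_isInfix ⟨z₁, y₂, by simp⟩⟩

lemma exists_isFactorS_of_phiW (hd : 2 ≤ d) (hu : IsPhiFixed d u) {s t : List ℕ} {a b : ℕ}
    (hs : 0 ∉ s) (ht : 0 ∉ t) (hv : IsFactorS v u)
    (h : IsFactorS (a :: (s ++ phiW d v ++ [0] ++ t.reverse) ++ [b]) u) :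
    ∃ a' b', IsFactorS (a' :: v ++ [b']) u ∧ a :: s <:+ phiL d a' ∧ b :: t <:+ phiL d b' := by
  obtain ⟨y, hy, p, q, hpq⟩ := h.exists_infix_phiW hu
  obtain ⟨y₁, y₂, rfl, h₁, h₂⟩ := exists_split_of_phiW_eq_append hd (y := y)
    (p := p ++ a :: s) (q := phiW d v ++ 0 :: (t.reverse ++ b :: q))
    (head?_phiW_append_zero_cons hd v _) (by simp [← hpq])
  obtain ⟨y₃, y₄, rfl, h₃, h₄⟩ := exists_split_of_phiW_eq_append hd (by simp) h₂
  have hy_lt := hy.lt hd hu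
  obtain rfl : y₃ = v :=
    phiW_injOn hd (fun x hx => hy_lt x (by simp [hx])) (hv.lt hd hu) h₃
  obtain ⟨z₁, a', rfl, ha⟩ := exists_concat_of_phiW_eq hd hs h₁
  obtain ⟨b', z₂, rfl, hb⟩ := exists_cons_of_phiW_eq hd ht h₄
  exact ⟨a', b', hy.of_isInfix ⟨z₁, z₂, by simp⟩, ha, hb⟩

end FixedPoint


section Anchored

variable {d : ℕ} {u : ℕ → ℕ} {v w s t : List ℕ} {a b a' b' : ℕ}

/-- The condition on the left-hand side of a triplet `(a, w, b)` that pulls back through `f`: the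
word `w` is left special, and some edge of its extension graph joins the letter `a < d - 1` on the
left to a letter `y ≥ b` on the right. -/
def LeftAnchored (d : ℕ) (u : ℕ → ℕ) (τ : ℕ × List ℕ × ℕ) : Prop :=
  τ.1 < d - 1 ∧ LeftSpecial u τ.2.1 ∧ ∃ y, τ.2.2 ≤ y ∧ IsFactorS (τ.1 :: τ.2.1 ++ [y]) u

/-- A triplet satisfying the conditions of `LeftAnchored` on both sides, the right-hand side being
read off the mirror image. -/
def Anchored (d : ℕ) (u : ℕ → ℕ) (τ : ℕ × List ℕ × ℕ) : Prop :=
  LeftAnchored d u τ ∧ LeftAnchored d u (tripleRev τ)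

lemma LeftSpecial.isFactorS (h : LeftSpecial u w) : IsFactorS w u := by
  obtain ⟨a, -, -, ha, -⟩ := h
  exact ha.of_isInfix (List.suffix_cons a w).isInfix

lemma LeftSpecial.of_phiW (hd : 2 ≤ d) (hu : IsPhiFixed d u) (hs : 0 ∉ s) (ht : 0 ∉ t)
    (hv : IsFactorS v u) (h : LeftSpecial u (s ++ phiW d v ++ [0] ++ t.reverse)) :
    LeftSpecial u v := by
  obtain ⟨a, b, h_ne, ha, hb⟩ := h
  obtain ⟨x, hx⟩ := ha.exists_append_singleton
  obtain ⟨y, hy⟩ := hb.exists_append_singleton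
  obtain ⟨a', x', ha', h_suffix_a, -⟩ := exists_isFactorS_of_phiW hd hu hs ht hv hx
  obtain ⟨b', y', hb', h_suffix_b, -⟩ := exists_isFactorS_of_phiW hd hu hs ht hv hy
  refine ⟨a', b', ?_, ha'.of_isInfix (List.prefix_append _ _).isInfix,
    hb'.of_isInfix (List.prefix_append _ _).isInfix⟩
  rintro rfl
  have h_suffix := List.suffix_of_suffix_length_le h_suffix_a h_suffix_b le_rfl
  exact h_ne (List.cons.inj (h_suffix.eq_of_length rfl)).1

lemma LeftAnchored.of_phiW (hd : 2 ≤ d) (hu : IsPhiFixed d u) (hs : s = [] ∨ s = [d - 1])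
    (ht : t = [] ∨ t = [d - 1]) (hv : IsFactorS v u) (ha : a :: s <:+ phiL d a')
    (hb : b :: t <:+ phiL d b') (hb_lt : b < d - 1)
    (h : LeftAnchored d u (a, s ++ phiW d v ++ [0] ++ t.reverse, b)) :
    LeftAnchored d u (a', v, b') := by
  obtain ⟨ha_lt, h_special, y, hby, h_edge⟩ := h
  have h0 {r : List ℕ} (hr : r = [] ∨ r = [d - 1]) : 0 ∉ r := by
    rcases hr with rfl | rfl
    · simp
    · simp only [List.mem_singleton]
      lia
  obtain ⟨a'', y', h_edge', ha'', hy⟩ :=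
    exists_isFactorS_of_phiW hd hu (h0 hs) (h0 ht) hv h_edge
  obtain rfl : a'' = a' := le_antisymm (le_of_suffix_phiL hs ha_lt le_rfl ha'' ha)
    (le_of_suffix_phiL hs ha_lt le_rfl ha ha'')
  exact ⟨(fmap_left_of_suffix_phiL hs ha_lt ha).1, h_special.of_phiW hd hu (h0 hs) (h0 ht) hv,
    y', le_of_suffix_phiL ht hb_lt hby hb hy, h_edge'⟩

lemma Anchored.exists_fmap_eq (hd : 2 ≤ d) (hu : IsPhiFixed d u) {τ : ℕ × List ℕ × ℕ}
    (h : Anchored d u τ) (h0 : 0 ∈ τ.2.1) :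
    ∃ τ', Anchored d u τ' ∧ fmap d τ' = τ ∧ τ'.2.1.length < τ.2.1.length := by
  obtain ⟨a, w, b⟩ := τ
  dsimp only at h0
  obtain ⟨s, v, t, rfl, hs0, ht0, hv⟩ := h.1.2.1.isFactorS.exists_eq_append_phiW_append hd hu h0
  obtain ⟨h_left, h_right⟩ := h
  rw [tripleRev, reverse_append_phiW_append, List.reverse_reverse] at h_right
  have hs : s = [] ∨ s = [d - 1] :=
    LeftSpecial.eq_nil_or_singleton hd hu (by simpa using h_left.2.1) hs0
  have ht : t = [] ∨ t = [d - 1] :=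
    LeftSpecial.eq_nil_or_singleton hd hu (by simpa using h_right.2.1) ht0
  have ha_lt : a < d - 1 := h_left.1
  have hb_lt : b < d - 1 := h_right.1
  obtain ⟨y, -, hy⟩ := h_left.2.2
  obtain ⟨x, -, hx⟩ := h_right.2.2
  obtain ⟨a', -, -, ha', -⟩ := exists_isFactorS_of_phiW hd hu hs0 ht0 hv hy
  obtain ⟨b', -, -, hb', -⟩ := exists_isFactorS_of_phiW hd hu ht0 hs0 (hv.reverse hd hu) hx
  refine ⟨(a', v, b'), ⟨h_left.of_phiW hd hu hs ht hv ha' hb' hb_lt,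
    h_right.of_phiW hd hu ht hs (hv.reverse hd hu) hb' ha' ha_lt⟩, ?_, ?_⟩
  · obtain ⟨-, h_mod_a, h_if_a⟩ := fmap_left_of_suffix_phiL hs ha_lt ha'
    obtain ⟨-, h_mod_b, h_if_b⟩ := fmap_left_of_suffix_phiL ht hb_lt hb'
    have h_rev : t.reverse = t := by rcases ht with rfl | rfl <;> rfl
    simp only [fmap, h_mod_a, h_mod_b, h_if_a, h_if_b, h_rev]
  · have := two_mul_length_le_length_phiW d v
    simp only [List.length_append, List.length_singleton]
    lia

lemma LeftAnchored.eq_zero_of_singleton (hd : 2 ≤ d) (hu : IsPhiFixed d u)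
    (h : LeftAnchored d u (a, [d - 1], b)) : a = 0 := by
  obtain ⟨ha_lt, -, y, -, h_edge⟩ := h
  by_contra ha
  have h_pair : IsFactorS [a, d - 1] u := h_edge.of_isInfix ⟨[], [y], rfl⟩
  have h0 : 0 ∉ [a, d - 1] := by
    simp only [List.mem_cons, List.not_mem_nil, or_false]
    lia
  have h_eq := h_pair.eq_pair_of_zero_notMem hd hu h0 le_rfl
  exact ha_lt.ne (List.cons.inj h_eq).1

lemma LeftAnchored.eq_zero_or_eq_zero_of_nil (hd : 2 ≤ d) (hu : IsPhiFixed d u)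
    (h : LeftAnchored d u (a, [], b)) : a = 0 ∨ b = 0 := by
  obtain ⟨ha_lt, -, y, hby, h_edge⟩ := h
  by_contra! h_ne
  have h0 : 0 ∉ [a, y] := by
    simp only [List.mem_cons, List.not_mem_nil, or_false]
    lia
  have h_eq := h_edge.eq_pair_of_zero_notMem hd hu h0 le_rfl
  exact ha_lt.ne (List.cons.inj h_eq).1

lemma Anchored.exists_Tinit (hd : 2 ≤ d) (hu : IsPhiFixed d u) {τ : ℕ × List ℕ × ℕ}
    (h : Anchored d u τ) (h0 : 0 ∉ τ.2.1) :
    ∃ k ≤ d - 1, Tinit d k = τ ∨ Tinit d k = tripleRev τ := by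
  obtain ⟨a, w, b⟩ := τ
  obtain ⟨h_left, h_right⟩ := h
  rcases LeftSpecial.eq_nil_or_singleton hd hu (r := []) (by simpa using h_left.2.1) h0
    with rfl | rfl
  · have ha_lt : a < d - 1 := h_left.1
    have hb_lt : b < d - 1 := h_right.1
    rcases h_left.eq_zero_or_eq_zero_of_nil hd hu with rfl | rfl
    · exact ⟨b, hb_lt.le, .inl (if_neg hb_lt.ne)⟩
    · exact ⟨a, ha_lt.le, .inr (if_neg ha_lt.ne)⟩
  · obtain rfl := h_left.eq_zero_of_singleton hd hu
    obtain rfl : b = 0 := LeftAnchored.eq_zero_of_singleton hd hu h_right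
    exact ⟨d - 1, le_rfl, .inl (if_pos rfl)⟩

lemma Anchored.exists_iterate_fmap_Tinit (hd : 2 ≤ d) (hu : IsPhiFixed d u) {τ : ℕ × List ℕ × ℕ}
    (h : Anchored d u τ) :
    ∃ k ≤ d - 1, ∃ n, (fmap d)^[n] (Tinit d k) = τ ∨ (fmap d)^[n] (Tinit d k) = tripleRev τ := by
  induction h_len : τ.2.1.length using Nat.strong_induction_on generalizing τ with
  | _ m ih =>
    subst h_len
    by_cases h0 : 0 ∈ τ.2.1
    · obtain ⟨τ', h', rfl, h_lt⟩ := h.exists_fmap_eq hd hu h0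
      obtain ⟨k, hk, n, hn⟩ := ih _ h_lt h' rfl
      refine ⟨k, hk, n + 1, ?_⟩
      rw [Function.iterate_succ_apply', ← fmap_tripleRev]
      exact hn.imp (congrArg (fmap d)) (congrArg (fmap d))
    · obtain ⟨k, hk, h_eq⟩ := h.exists_Tinit hd hu h0
      exact ⟨k, hk, 0, h_eq⟩

lemma LeftSpecial.exists_minimal (hd : 2 ≤ d) (hu : IsPhiFixed d u) (h : LeftSpecial u w) :
    ∃ a < d - 1, IsFactorS (a :: w) u ∧ ∀ x, IsFactorS (x :: w) u → a ≤ x := by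
  obtain ⟨x, y, h_ne, hx, hy⟩ := h
  obtain ⟨a, ha, ha_min⟩ : ∃ a, IsFactorS (a :: w) u ∧ ∀ z, IsFactorS (z :: w) u → a ≤ z :=
    ⟨sInf {z | IsFactorS (z :: w) u}, Nat.sInf_mem (s := {z | IsFactorS (z :: w) u}) ⟨x, hx⟩,
      fun _ hz => Nat.sInf_le hz⟩
  have hx_lt := hx.lt hd hu x List.mem_cons_self
  have hy_lt := hy.lt hd hu y List.mem_cons_self
  have hx_min := ha_min x hx
  have hy_min := ha_min y hy
  exact ⟨a, by lia, ha, ha_min⟩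

lemma leftAnchored_of_forall_le (hd : 2 ≤ d) (hu : IsPhiFixed d u) (ha : a < d - 1)
    (hw : LeftSpecial u w) (haw : IsFactorS (a :: w) u)
    (hb : ∀ y, IsFactorS (y :: w.reverse) u → b ≤ y) : LeftAnchored d u (a, w, b) := by
  obtain ⟨y, hy⟩ := haw.exists_append_singleton
  have hwy : IsFactorS (w ++ [y]) u := hy.of_isInfix (List.suffix_cons a _).isInfix
  exact ⟨ha, hw, y, hb y (by simpa using hwy.reverse hd hu), hy⟩

lemma Bispecial.exists_anchored (hd : 2 ≤ d) (hu : IsPhiFixed d u) (hw : Bispecial u w) :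
    ∃ a b, TripleMem d u (a, w, b) ∧ Anchored d u (a, w, b) := by
  have h_left := hw.leftSpecial
  have h_right := (hw.reverse hd hu).leftSpecial
  obtain ⟨a, ha_lt, ha, ha_min⟩ := h_left.exists_minimal hd hu
  obtain ⟨b, hb_lt, hb, hb_min⟩ := h_right.exists_minimal hd hu
  exact ⟨a, b, ⟨hw, ha_lt, hb_lt, ha, by simpa using hb.reverse hd hu⟩,
    leftAnchored_of_forall_le hd hu ha_lt h_left ha hb_min,
    leftAnchored_of_forall_le hd hu hb_lt h_right hb (by simpa using ha_min)⟩

theorem statement10_general (d : ℕ) (hd : 2 ≤ d) (u : ℕ → ℕ) (hu : IsPhiFixed d u)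
    (w : List ℕ) (hw : Bispecial u w) :
    ∃ k : ℕ, k ≤ d - 1 ∧ ∃ n : ℕ,
      TripleMem d u ((fmap d)^[n] (Tinit d k)) ∧
      (((fmap d)^[n] (Tinit d k)).2.1 = w ∨
        ((fmap d)^[n] (Tinit d k)).2.1 = w.reverse) := by
  obtain ⟨a, b, h_mem, h_anchored⟩ := hw.exists_anchored hd hu
  obtain ⟨k, hk, n, h_eq⟩ := h_anchored.exists_iterate_fmap_Tinit hd hu
  refine ⟨k, hk, n, ?_⟩
  rcases h_eq with h_eq | h_eq <;> rw [h_eq]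
  · exact ⟨h_mem, .inl rfl⟩
  · exact ⟨h_mem.mirror hd hu, .inr rfl⟩

end Anchored

/-- Let `d ≥ 3`. For every bispecial factor `w` of `u_d` there exist
`k ≤ d−1` and `n ∈ ℕ` such that `f^n(T_k)` is a triplet of `𝒯` whose middle component
is `w` or the reversal of `w`. -/
theorem statement10 (d : ℕ) (hd : 3 ≤ d) (u : ℕ → ℕ) (hu : IsPhiFixed d u)
    (w : List ℕ) (hw : Bispecial u w) :
    ∃ k : ℕ, k ≤ d - 1 ∧ ∃ n : ℕ,
      TripleMem d u ((fmap d)^[n] (Tinit d k)) ∧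
      (((fmap d)^[n] (Tinit d k)).2.1 = w ∨
        ((fmap d)^[n] (Tinit d k)).2.1 = w.reverse) := by
  exact statement10_general d (by lia) u hu w hw

end RichRT
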